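/- Let G be an S-graph with a spanning S-forest F having k connected components. Then β(G) = 5k and α(G) ≥ 4k; moreover, β(G)/α(G) = 5/4 (i.e., 4·β(G) = 5·α(G)) if and only if α(G) = 4k. -/

import Mathlib

open SimpleGraph

/-- A matching of `G`, given as a finite set of edges of `G` that are pairwise non-adjacent. -/
def IsMatchingE {V : Type*} (G : SimpleGraph V) (M : Finset (Sym2 V)) : Prop :=
  ↑M ⊆ G.edgeSet ∧ ∀ e ∈ M, ∀ f ∈ M, e ≠ f → ∀ v : V, ¬(v ∈ e ∧ v ∈ f)

/-- A vertex is covered by a set of edges if some edge of it is incident to the vertex. -/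
def Covers {V : Type*} (M : Finset (Sym2 V)) (v : V) : Prop := ∃ e ∈ M, v ∈ e

/-- `β(G)`: the maximum size of a matching of `G`. -/
noncomputable def gBeta {V : Type*} (G : SimpleGraph V) : ℕ :=
  sSup {n | ∃ M : Finset (Sym2 V), IsMatchingE G M ∧ M.card = n}

/-- `λ(G)`: the maximum of `|H| + |H'|` over pairs `(H, H')` of disjoint matchings of `G`. -/
noncomputable def gLam {V : Type*} (G : SimpleGraph V) : ℕ :=
  sSup {n | ∃ H H' : Finset (Sym2 V), IsMatchingE G H ∧ IsMatchingE G H' ∧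
    Disjoint H H' ∧ H.card + H'.card = n}

/-- `α(G)`: the maximum of `|H|` over pairs `(H, H')` of disjoint matchings of `G`
with `|H| + |H'| = λ(G)`. -/
noncomputable def gAlpha {V : Type*} (G : SimpleGraph V) : ℕ :=
  sSup {n | ∃ H H' : Finset (Sym2 V), IsMatchingE G H ∧ IsMatchingE G H' ∧
    Disjoint H H' ∧ H.card + H'.card = gLam G ∧ H.card = n}

/-- `β₁(G)`: the maximum of `β(G \ F)` over maximum matchings `F` of `G`. -/
noncomputable def gBeta1 {V : Type*} (G : SimpleGraph V) : ℕ :=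
  sSup {n | ∃ F : Finset (Sym2 V), IsMatchingE G F ∧ F.card = gBeta G ∧
    gBeta (G.deleteEdges ↑F) = n}

/-- Membership in `M₂(G)`: `(H, H')` is a pair of disjoint matchings of `G` with
`|H| + |H'| = λ(G)` and `|H| = α(G)`. -/
def InM2 {V : Type*} (G : SimpleGraph V) (H H' : Finset (Sym2 V)) : Prop :=
  IsMatchingE G H ∧ IsMatchingE G H' ∧ Disjoint H H' ∧
  H.card + H'.card = gLam G ∧ H.card = gAlpha G

/-- Membership in `M₂(G, M)`: pairs from `M₂(G)` maximizing `|M ∩ (H ∪ H')|`. -/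
def InM2M {V : Type*} [DecidableEq V] (G : SimpleGraph V) (M H H' : Finset (Sym2 V)) : Prop :=
  InM2 G H H' ∧ ∀ K K' : Finset (Sym2 V), InM2 G K K' →
    (M ∩ (K ∪ K')).card ≤ (M ∩ (H ∪ H')).card

/-- The degree of a vertex `v` in the graph `F`. -/
noncomputable def fdeg {V : Type*} (F : SimpleGraph V) (v : V) : ℕ := (F.neighborSet v).ncard

/-- The spanner: two paths `a₁a₂a₃a₄a₅` and `b₁b₂b₃b₄b₅` joined by the edge `a₃b₃`.
Vertices `0..4` are `a₁..a₅` and `5..9` are `b₁..b₅`. -/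
def Spanner10 : SimpleGraph (Fin 10) :=
  SimpleGraph.fromEdgeSet
    {s(0, 1), s(1, 2), s(2, 3), s(3, 4), s(5, 6), s(6, 7), s(7, 8), s(8, 9), s(2, 7)}

/-- An S-forest: every connected component is isomorphic to the spanner. -/
def IsSForest {V : Type*} (F : SimpleGraph V) : Prop :=
  ∀ c : F.ConnectedComponent, Nonempty ((F.induce c.supp) ≃g Spanner10)

/-- `U(F)`: edges of `F` incident to a vertex of degree 1. -/
def USet {V : Type*} (F : SimpleGraph V) : Set (Sym2 V) :=
  {e | e ∈ F.edgeSet ∧ ∃ v ∈ e, fdeg F v = 1}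

/-- `L(F)`: edges of `F` not in `U(F)` incident to a vertex of degree 2. -/
def LSet {V : Type*} (F : SimpleGraph V) : Set (Sym2 V) :=
  {e | e ∈ F.edgeSet ∧ e ∉ USet F ∧ ∃ v ∈ e, fdeg F v = 2}

/-- `w` is the base of the 1-vertex `u` of `F`: a 3-vertex at `F`-distance 2 from `u`. -/
def IsBase {V : Type*} (F : SimpleGraph V) (u w : V) : Prop :=
  fdeg F w = 3 ∧ F.dist u w = 2

/-- `Δ(G, F)`: edges of `G` joining a 1-vertex of `F` to its base. -/
def DeltaSet {V : Type*} (G F : SimpleGraph V) : Set (Sym2 V) :=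
  {e | e ∈ G.edgeSet ∧ ∃ u w : V, e = s(u, w) ∧ fdeg F u = 1 ∧ IsBase F u w}

/-- `B(G, F) = E(G) \ (U(F) ∪ L(F) ∪ Δ(G, F))`. -/
def BSet {V : Type*} (G F : SimpleGraph V) : Set (Sym2 V) :=
  G.edgeSet \ (USet F ∪ LSet F ∪ DeltaSet G F)

/-- Condition (a): no 1-vertex of `F` is incident to an edge from `B(G, F)`. -/
def CondA {V : Type*} (G F : SimpleGraph V) : Prop :=
  ∀ v : V, fdeg F v = 1 → ∀ e ∈ BSet G F, v ∉ e

/-- Condition (b): if a 1-vertex `u` of `F` is incident to an edge from `Δ(G, F)`, then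
the 2-vertex of `F` adjacent to `u` in `F` is not incident to any edge from `B(G, F)`. -/
def CondB {V : Type*} (G F : SimpleGraph V) : Prop :=
  ∀ u v : V, fdeg F u = 1 → (∃ e ∈ DeltaSet G F, u ∈ e) →
    F.Adj u v → fdeg F v = 2 → ∀ e ∈ BSet G F, v ∉ e

/-- Condition (c): for every `L(F)`-`B(G, F)` alternating even closed trail of `G`
containing an edge joining two 2-vertices of `F`, the graph formed by its edges belonging
to `B(G, F)` is not bipartite (2-colorable). -/
def CondC {V : Type*} (G F : SimpleGraph V) : Prop :=
  ∀ (n : ℕ) (e : ℕ → Sym2 V),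
    1 ≤ n →
    (∀ i j, i < 2 * n → j < 2 * n → e i = e j → i = j) →
    (∀ i, i < 2 * n → e i ∈ G.edgeSet) →
    (∀ i, i + 1 < 2 * n → ∃ v : V, v ∈ e i ∧ v ∈ e (i + 1)) →
    (∃ v : V, v ∈ e (2 * n - 1) ∧ v ∈ e 0) →
    (∀ i, i < 2 * n → (i % 2 = 0 → e i ∈ LSet F) ∧ (i % 2 = 1 → e i ∈ BSet G F)) →
    (∃ i, i < 2 * n ∧ ∀ v ∈ e i, fdeg F v = 2) →
    ¬ (SimpleGraph.fromEdgeSet {f | ∃ i, i < 2 * n ∧ f = e i ∧ f ∈ BSet G F}).Colorable 2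

/-!
A matching has at most `|V| / 2` edges. The spanner has a perfect matching and also two disjoint
matchings with four edges each; repeating these in the `k` components of `F` gives `β(G) = 5k` and
`8k ≤ λ(G)`. In an optimal pair `(H, H')` either matching may be taken as the first one, so both
have at most `α(G)` edges and `8k ≤ λ(G) ≤ 2α(G)`.
-/

section MaximumMatchings

variable {V : Type*} {G : SimpleGraph V} {M H H' : Finset (Sym2 V)}

theorem IsMatchingE.two_mul_card_le [Finite V] (hM : IsMatchingE G M) :
    2 * M.card ≤ Nat.card V := by
  classical
  have := Fintype.ofFinite V
  have pairwise_disjoint : (M : Set (Sym2 V)).PairwiseDisjoint Sym2.toFinset :=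
    fun e he f hf hef => Finset.disjoint_left.2 fun v hve hvf =>
      hM.2 e he f hf hef v ⟨Sym2.mem_toFinset.1 hve, Sym2.mem_toFinset.1 hvf⟩
  calc 2 * M.card = ∑ e ∈ M, e.toFinset.card := by
        rw [Finset.sum_const_nat fun e he =>
          Sym2.card_toFinset_of_not_isDiag e (G.not_isDiag_of_mem_edgeSet (hM.1 he)), mul_comm]
    _ = (M.biUnion Sym2.toFinset).card := (Finset.card_biUnion pairwise_disjoint).symm
    _ ≤ Nat.card V := by
        rw [Nat.card_eq_fintype_card]
        exact Finset.card_le_univ _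

theorem IsMatchingE.gBeta_eq_card [Finite V] (hM : IsMatchingE G M)
    (perfect : 2 * M.card = Nat.card V) : gBeta G = M.card := by
  refine IsGreatest.csSup_eq ⟨⟨M, hM, rfl⟩, ?_⟩
  rintro n ⟨N, hN, rfl⟩
  have := hN.two_mul_card_le
  omega

theorem bddAbove_card_add_card_of_disjoint_matchings [Finite V] (G : SimpleGraph V) :
    BddAbove {n | ∃ H H' : Finset (Sym2 V), IsMatchingE G H ∧ IsMatchingE G H' ∧
      Disjoint H H' ∧ H.card + H'.card = n} := by
  refine ⟨Nat.card V, ?_⟩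
  rintro n ⟨H, H', hH, hH', -, rfl⟩
  have := hH.two_mul_card_le
  have := hH'.two_mul_card_le
  omega

theorem IsMatchingE.card_add_card_le_gLam [Finite V] (hH : IsMatchingE G H)
    (hH' : IsMatchingE G H') (hdisj : Disjoint H H') : H.card + H'.card ≤ gLam G :=
  le_csSup (bddAbove_card_add_card_of_disjoint_matchings G) ⟨H, H', hH, hH', hdisj, rfl⟩

theorem exists_card_add_card_eq_gLam [Finite V] (G : SimpleGraph V) :
    ∃ H H' : Finset (Sym2 V), IsMatchingE G H ∧ IsMatchingE G H' ∧
      Disjoint H H' ∧ H.card + H'.card = gLam G := by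
  have isMatchingE_empty : IsMatchingE G ∅ := by simp [IsMatchingE]
  refine Nat.sSup_mem ?_ (bddAbove_card_add_card_of_disjoint_matchings G)
  exact ⟨_, ∅, ∅, isMatchingE_empty, isMatchingE_empty, Finset.disjoint_empty_left _, rfl⟩

theorem IsMatchingE.card_le_gAlpha [Finite V] (hH : IsMatchingE G H) (hH' : IsMatchingE G H')
    (hdisj : Disjoint H H') (hcard : H.card + H'.card = gLam G) : H.card ≤ gAlpha G := by
  refine le_csSup ⟨gLam G, ?_⟩ ⟨H, H', hH, hH', hdisj, hcard, rfl⟩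
  rintro n ⟨K, K', -, -, -, hK, rfl⟩
  omega

theorem gLam_le_two_mul_gAlpha [Finite V] (G : SimpleGraph V) : gLam G ≤ 2 * gAlpha G := by
  obtain ⟨H, H', hH, hH', hdisj, hcard⟩ := exists_card_add_card_eq_gLam G
  have := hH.card_le_gAlpha hH' hdisj hcard
  have := hH'.card_le_gAlpha hH hdisj.symm (by omega)
  omega

end MaximumMatchings

section Copies

variable {V W ι : Type*} {G F : SimpleGraph V} {K : SimpleGraph W} {M : Finset (Sym2 W)}

theorem IsMatchingE.map (hM : IsMatchingE K M) (f : Copy K G) :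
    IsMatchingE G (M.map f.toEmbedding.sym2Map) := by
  simp only [IsMatchingE, Finset.coe_map, Finset.forall_mem_map, Set.image_subset_iff]
  refine ⟨fun e he => (f.mapEdgeSet ⟨e, hM.1 he⟩).2, fun e he e' he' hne v ⟨hv, hv'⟩ => ?_⟩
  obtain ⟨i, hi, rfl⟩ := Sym2.mem_map.1 hv
  obtain ⟨j, hj, hji⟩ := Sym2.mem_map.1 hv'
  obtain rfl : j = i := f.injective hji
  exact hM.2 e he e' he' (fun h => hne (h ▸ rfl)) j ⟨hi, hj⟩

/-- `edgeCopy ι W (c, e)` is the `c`-th copy of the edge `e` in a family of disjoint copies of a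
graph on `W` indexed by `ι`; it serves to repeat a matching in every copy. The family is encoded as
the box product of the edgeless graph on `ι` with the given graph. -/
def edgeCopy (ι W : Type*) : ι × Sym2 W ↪ Sym2 (ι × W) where
  toFun p := p.2.map (Prod.mk p.1)
  inj' := by
    rintro ⟨c, e⟩ ⟨d, e'⟩ h
    change e.map (Prod.mk c) = e'.map (Prod.mk d) at h
    have hmem : (c, e.out.1) ∈ e'.map (Prod.mk d) :=
      h ▸ Sym2.mem_map.2 ⟨_, Sym2.out_fst_mem e, rfl⟩
    obtain ⟨_, -, hi⟩ := Sym2.mem_map.1 hmem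
    obtain rfl : d = c := congrArg Prod.fst hi
    exact congrArg (Prod.mk d) (Sym2.map.injective (Prod.mk_right_injective d) h)

theorem mem_edgeCopy {p : ι × Sym2 W} {x : ι × W} :
    x ∈ edgeCopy ι W p ↔ x.1 = p.1 ∧ x.2 ∈ p.2 := by
  obtain ⟨c, e⟩ := p
  obtain ⟨d, i⟩ := x
  change (d, i) ∈ e.map (Prod.mk c) ↔ _
  simp only [Sym2.mem_map, Prod.mk.injEq]
  grind

theorem IsMatchingE.map_edgeCopy [Fintype ι] (hM : IsMatchingE K M) :
    IsMatchingE ((⊥ : SimpleGraph ι) □ K) ((Finset.univ ×ˢ M).map (edgeCopy ι W)) := by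
  simp only [IsMatchingE, Finset.coe_map, Finset.forall_mem_map, Set.image_subset_iff]
  constructor
  · rintro ⟨c, e⟩ he
    exact ((boxProdRight ⊥ K c).toCopy.mapEdgeSet ⟨e, hM.1 (Finset.mem_product.1 he).2⟩).2
  · rintro ⟨c, e⟩ he ⟨d, e'⟩ he' hne ⟨b, i⟩ ⟨hi, hi'⟩
    obtain ⟨rfl, hie⟩ := mem_edgeCopy.1 hi
    obtain ⟨rfl, hie'⟩ := mem_edgeCopy.1 hi'
    exact hM.2 e (Finset.mem_product.1 he).2 e' (Finset.mem_product.1 he').2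
      (fun h => hne (h ▸ rfl)) i ⟨hie, hie'⟩

theorem nonempty_iso_bot_boxProd_of_components
    (hF : ∀ c : F.ConnectedComponent, Nonempty (F.induce c.supp ≃g K)) :
    Nonempty (F ≃g (⊥ : SimpleGraph F.ConnectedComponent) □ K) := by
  have φ (c : F.ConnectedComponent) : F.induce c.supp ≃g K := (hF c).some
  let toProd (v : V) : F.ConnectedComponent × W :=
    (F.connectedComponentMk v, φ (F.connectedComponentMk v) ⟨v, rfl⟩)
  have toProd_coe (c : F.ConnectedComponent) (x : c.supp) : toProd x = (c, φ c x) := by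
    obtain ⟨v, rfl⟩ := x
    rfl
  let e : V ≃ F.ConnectedComponent × W :=
    { toFun := toProd
      invFun := fun p => ((φ p.1).symm p.2 : V)
      left_inv := fun v => congrArg Subtype.val ((φ _).symm_apply_apply ⟨v, rfl⟩)
      right_inv := fun ⟨c, i⟩ => by rw [toProd_coe, RelIso.apply_symm_apply] }
  refine ⟨⟨e, fun {v w} => ?_⟩⟩
  change ((⊥ : SimpleGraph _) □ K).Adj (toProd v) (toProd w) ↔ F.Adj v w
  by_cases hvw : F.connectedComponentMk w = F.connectedComponentMk v
  · rw [toProd_coe _ ⟨w, hvw⟩, boxProd_adj_right, (φ _).map_adj_iff]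
    rfl
  · refine iff_of_false ?_ fun h => hvw (ConnectedComponent.connectedComponentMk_eq_of_adj h).symm
    simp [toProd, boxProd_adj, Ne.symm hvw]

theorem gBeta_eq_of_copy_bot_boxProd [Finite V] [Finite ι] (f : Copy ((⊥ : SimpleGraph ι) □ K) G)
    (spanning : Nat.card V = Nat.card ι * Nat.card W) (hM : IsMatchingE K M)
    (perfect : 2 * M.card = Nat.card W) : gBeta G = Nat.card ι * M.card := by
  have := Fintype.ofFinite ι
  have card_copies : (((Finset.univ ×ˢ M).map (edgeCopy ι W)).map f.toEmbedding.sym2Map).card =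
      Nat.card ι * M.card := by
    rw [Finset.card_map, Finset.card_map, Finset.card_product, Finset.card_univ,
      Nat.card_eq_fintype_card]
  rw [← card_copies]
  refine (hM.map_edgeCopy.map f).gBeta_eq_card ?_
  rw [card_copies, spanning, ← perfect, mul_left_comm]

theorem card_mul_le_gLam_of_copy_bot_boxProd [Finite V] [Finite ι]
    (f : Copy ((⊥ : SimpleGraph ι) □ K) G) {H H' : Finset (Sym2 W)} (hH : IsMatchingE K H)
    (hH' : IsMatchingE K H') (hdisj : Disjoint H H') :
    Nat.card ι * (H.card + H'.card) ≤ gLam G := by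
  have := Fintype.ofFinite ι
  have disjoint_copies := (Finset.disjoint_map f.toEmbedding.sym2Map).2
    ((Finset.disjoint_map (edgeCopy ι W)).2
      (Finset.disjoint_product.2 (Or.inr hdisj) : Disjoint (Finset.univ ×ˢ H) (Finset.univ ×ˢ H')))
  simpa only [Finset.card_map, Finset.card_product, Finset.card_univ, Nat.card_eq_fintype_card,
    mul_add] using
    (hH.map_edgeCopy.map f).card_add_card_le_gLam (hH'.map_edgeCopy.map f) disjoint_copies

end Copies

theorem Spanner10.exists_isMatchingE_card_eq_five :
    ∃ M : Finset (Sym2 (Fin 10)), IsMatchingE Spanner10 M ∧ M.card = 5 := by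
  refine ⟨{s(0, 1), s(3, 4), s(5, 6), s(8, 9), s(2, 7)}, ⟨?_, by decide +kernel⟩, rfl⟩
  simp [Spanner10, Set.insert_subset_iff]

theorem Spanner10.exists_disjoint_isMatchingE_card_eq_four :
    ∃ H H' : Finset (Sym2 (Fin 10)), IsMatchingE Spanner10 H ∧ IsMatchingE Spanner10 H' ∧
      Disjoint H H' ∧ H.card = 4 ∧ H'.card = 4 := by
  refine ⟨{s(0, 1), s(2, 3), s(5, 6), s(7, 8)}, {s(1, 2), s(3, 4), s(6, 7), s(8, 9)},
    ⟨?_, by decide +kernel⟩, ⟨?_, by decide +kernel⟩, by decide, rfl, rfl⟩ <;>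
  simp [Spanner10, Set.insert_subset_iff]

/-- if `G` is an S-graph with a spanning S-forest `F` having `k` connected
components, then `β(G) = 5k`, `α(G) ≥ 4k`, and `β(G)/α(G) = 5/4` iff `α(G) = 4k`. -/
theorem stmt19 {V : Type*} [Fintype V] [DecidableEq V] (G F : SimpleGraph V)
    (hFG : F ≤ G) (hF : IsSForest F) (k : ℕ)
    (hk : Nat.card F.ConnectedComponent = k) :
    gBeta G = 5 * k ∧ 4 * k ≤ gAlpha G ∧
    (4 * gBeta G = 5 * gAlpha G ↔ gAlpha G = 4 * k) := by
  obtain ⟨φ⟩ := nonempty_iso_bot_boxProd_of_components hF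
  have f : Copy ((⊥ : SimpleGraph F.ConnectedComponent) □ Spanner10) G :=
    (Copy.ofLE F G hFG).comp φ.symm.toCopy
  have spanning : Nat.card V = Nat.card F.ConnectedComponent * Nat.card (Fin 10) := by
    rw [Nat.card_congr φ.toEquiv, Nat.card_prod]
  obtain ⟨M, hM, hM5⟩ := Spanner10.exists_isMatchingE_card_eq_five
  obtain ⟨H, H', hH, hH', hdisj, hH4, hH'4⟩ := Spanner10.exists_disjoint_isMatchingE_card_eq_four
  have hbeta := gBeta_eq_of_copy_bot_boxProd f spanning hM (by rw [hM5, Nat.card_fin])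
  have hlam := card_mul_le_gLam_of_copy_bot_boxProd f hH hH' hdisj
  have halpha := gLam_le_two_mul_gAlpha G
  rw [hk, hM5] at hbeta
  rw [hk, hH4, hH'4] at hlam
  omega
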